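/- Let G be a graph on {1,...,n}, and r,k ≥ 1 with k ≥ r and r·k even. Then N_{r,k}(G) = (3/2)·r·(k-r+1) if and only if G contains an (r,t)-subgraph with t = (1/2)·r·(k-r+1). -/

import Mathlib

open SimpleGraph

def IsExtension (n r k : ℕ) (G : SimpleGraph (Fin n)) (H : SimpleGraph (Fin (n + r))) : Prop :=
  (∀ i : Fin n, (H.neighborSet (Fin.castAdd r i)).ncard = (G.neighborSet i).ncard) ∧
  (∀ j : Fin r, (H.neighborSet (Fin.natAdd n j)).ncard = k)

def E1 (n r : ℕ) (H : SimpleGraph (Fin (n + r))) : Set (Sym2 (Fin (n + r))) :=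
  {e | e ∈ H.edgeSet ∧ ∃ i : Fin n, Fin.castAdd r i ∈ e}

def oldEdges (n r : ℕ) (G : SimpleGraph (Fin n)) : Set (Sym2 (Fin (n + r))) :=
  Sym2.map (Fin.castAdd r) '' G.edgeSet

noncomputable def editCost (n r : ℕ) (G : SimpleGraph (Fin n)) (H : SimpleGraph (Fin (n + r))) : ℕ :=
  (oldEdges n r G \ E1 n r H).ncard + (E1 n r H \ oldEdges n r G).ncard

noncomputable def editNumber (n r k : ℕ) (G : SimpleGraph (Fin n)) : ℕ∞ :=
  sInf ((fun H => (editCost n r G H : ℕ∞)) '' {H | IsExtension n r k G H})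

def IsRTSubgraph {V : Type*} (G : SimpleGraph V) (r t : ℕ) (S : Set (Sym2 V)) : Prop :=
  S ⊆ G.edgeSet ∧ S.ncard = t ∧ ∀ v : V, {e | e ∈ S ∧ v ∈ e}.ncard ≤ r

/- Let `A` be the set of deleted edges of `G`, `B` the set of edges added between old vertices and
`c` the number of edges of `H` joining an old vertex to a new one. Old degrees are preserved, so
`2 |A| = 2 |B| + c`, and the cost `|A| + |B| + c` satisfies `2 * cost = 4 |B| + 3 c`. A new vertex
has at most `r - 1` new neighbours, so `c ≥ r (k - r + 1)`; equality in the resulting bound forces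
`B = ∅`, and then an old vertex lies on as many deleted edges as it has new neighbours, which is at
most `r`. Conversely, delete an `(r, t)`-subgraph `T`, let the new vertices form a clique, and
distribute the `2 t` half-edges of `T` evenly among them by dealing them out cyclically. -/

open Finset

section Dealing

/-- Deal the elements, each repeated `d i` times, cyclically onto `r` places in `m` rounds: the
copies of one element are consecutive and at most `r` in number, so they land in different
places. -/
lemma exists_equiv_prod_fin_injective {n r m : ℕ} (d : Fin n → ℕ) (hd : ∀ i, d i ≤ r)
    (hsum : ∑ i, d i = m * r) :
    ∃ e : (Σ i, Fin (d i)) ≃ Fin m × Fin r, ∀ i, Function.Injective fun a ↦ (e ⟨i, a⟩).2 := by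
  refine ⟨finSigmaFinEquiv.trans ((finCongr hsum).trans finProdFinEquiv.symm), fun i a b hab ↦ ?_⟩
  have hmod : (finSigmaFinEquiv ⟨i, a⟩ : ℕ) ≡ finSigmaFinEquiv ⟨i, b⟩ [MOD r] :=
    congrArg Fin.val hab
  simp only [finSigmaFinEquiv_apply] at hmod
  exact Fin.ext <| (Nat.ModEq.add_left_cancel' _ hmod).eq_of_lt_of_lt
    (a.2.trans_le (hd i)) (b.2.trans_le (hd i))

lemma exists_rel_ncard_eq_of_equiv_prod {ι κ : Type*} {m : ℕ} {d : ι → ℕ}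
    (e : (Σ i, Fin (d i)) ≃ Fin m × κ) (he : ∀ i, Function.Injective fun a ↦ (e ⟨i, a⟩).2) :
    ∃ R : ι → κ → Prop, (∀ i, {j | R i j}.ncard = d i) ∧ ∀ j, {i | R i j}.ncard = m := by
  refine ⟨fun i j ↦ ∃ a, (e ⟨i, a⟩).2 = j, fun i ↦ ?_, fun j ↦ ?_⟩
  · exact (Nat.card_range_of_injective (he i)).trans (Nat.card_fin _)
  · have hext (x y : Σ i, Fin (d i)) (hfst : x.1 = y.1) (hsnd : (e x).2 = (e y).2) : x = y := by
      obtain ⟨i, a⟩ := x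
      obtain ⟨i', b⟩ := y
      obtain rfl : i = i' := hfst
      rw [he i hsnd]
    have hinj : Function.Injective fun q ↦ (e.symm (q, j)).1 := fun p q hpq ↦
      congrArg Prod.fst (e.symm.injective (hext _ _ hpq (by simp)))
    have hrange : {i | ∃ a, (e ⟨i, a⟩).2 = j} = Set.range fun q ↦ (e.symm (q, j)).1 := by
      ext i
      constructor
      · rintro ⟨a, rfl⟩
        exact ⟨(e ⟨i, a⟩).1, by simp⟩
      · rintro ⟨q, rfl⟩
        exact ⟨(e.symm (q, j)).2, by simp⟩
    rw [hrange]
    exact (Nat.card_range_of_injective hinj).trans (Nat.card_fin m)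

lemma exists_rel_ncard_eq_of_sum_eq {ι κ : Type*} [Fintype ι] [Finite κ] {m : ℕ} (d : ι → ℕ)
    (hd : ∀ i, d i ≤ Nat.card κ) (hsum : ∑ i, d i = m * Nat.card κ) :
    ∃ R : ι → κ → Prop, (∀ i, {j | R i j}.ncard = d i) ∧ ∀ j, {i | R i j}.ncard = m := by
  let u := Fintype.equivFin ι
  let v := Finite.equivFin κ
  obtain ⟨e, he⟩ := exists_equiv_prod_fin_injective (d ∘ u.symm) (fun i ↦ hd _)
    ((u.symm.sum_comp d).trans hsum)
  obtain ⟨R, hrow, hcol⟩ := exists_rel_ncard_eq_of_equiv_prod e he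
  refine ⟨fun i j ↦ R (u i) (v j), fun i ↦ ?_, fun j ↦ ?_⟩
  · rw [← Set.preimage_ofPred_eq (f := v), Set.ncard_preimage_of_injective_subset_range v.injective
      (by simp), hrow]
    simp
  · rw [← Set.preimage_ofPred_eq (f := u) (p := fun i ↦ R i (v j)),
      Set.ncard_preimage_of_injective_subset_range u.injective (by simp), hcol]

end Dealing

section DoubleCounting

variable {α β : Type*} [Fintype α]

lemma ncard_rel_eq_sum_ncard [Finite β] (R : α → β → Prop) :
    {p : α × β | R p.1 p.2}.ncard = ∑ a, {b | R a b}.ncard := by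
  classical
  have := Fintype.ofFinite β
  simp only [Set.ncard_eq_toFinset_card', Set.toFinset_ofPred, card_filter, Fintype.sum_prod_type]

lemma sum_ncard_rel_comm [Fintype β] (R : α → β → Prop) :
    ∑ a, {b | R a b}.ncard = ∑ b, {a | R a b}.ncard := by
  classical
  simp only [Set.ncard_eq_toFinset_card', Set.toFinset_ofPred]
  exact sum_card_bipartiteAbove_eq_sum_card_bipartiteBelow R

end DoubleCounting

section Degree

variable {V : Type*} (G K : SimpleGraph V)

lemma ncard_neighborSet_sdiff_add_ncard_neighborSet_inf [Finite V] (v : V) :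
    ((G \ K).neighborSet v).ncard + ((G ⊓ K).neighborSet v).ncard = (G.neighborSet v).ncard := by
  rw [neighborSet_sdiff, neighborSet_inf, add_comm, Set.ncard_inter_add_ncard_sdiff_eq_ncard]

lemma sum_ncard_neighborSet_eq_two_mul_ncard_edgeSet [Fintype V] :
    ∑ v, (G.neighborSet v).ncard = 2 * G.edgeSet.ncard := by
  classical
  simp only [Set.ncard_eq_toFinset_card']
  exact sum_degrees_eq_twice_card_edges G

lemma ncard_incidenceSet_eq_ncard_neighborSet (v : V) :
    (G.incidenceSet v).ncard = (G.neighborSet v).ncard := by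
  classical
  exact Nat.card_congr (G.incidenceSetEquivNeighborSet v)

variable {G K} in
lemma isRTSubgraph_edgeSet_iff {r t : ℕ} : IsRTSubgraph G r t K.edgeSet ↔
    K ≤ G ∧ K.edgeSet.ncard = t ∧ ∀ v, (K.neighborSet v).ncard ≤ r := by
  simp only [← ncard_incidenceSet_eq_ncard_neighborSet, IsRTSubgraph, edgeSet_subset_edgeSet]
  rfl

end Degree

lemma IsRTSubgraph.exists_edgeSet_eq {V : Type*} {G : SimpleGraph V} {r t : ℕ} {S : Set (Sym2 V)}
    (h : IsRTSubgraph G r t S) : ∃ T : SimpleGraph V, T.edgeSet = S := by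
  refine ⟨fromEdgeSet S, ?_⟩
  rw [edgeSet_fromEdgeSet, sdiff_eq_left, Set.disjoint_left]
  exact fun e he ↦ G.not_isDiag_of_mem_edgeSet (h.1 he)

section Parts

variable {n r k : ℕ} (G : SimpleGraph (Fin n)) (H : SimpleGraph (Fin (n + r)))

/-- The subgraph of `H` induced on the old vertices `{1, ..., n}`. -/
abbrev oldPart : SimpleGraph (Fin n) := H.comap (Fin.castAdd r)

/-- The subgraph of `H` induced on the new vertices `{n + 1, ..., n + r}`. -/
abbrev newPart : SimpleGraph (Fin r) := H.comap (Fin.natAdd n)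

/-- The edges of `H` between an old and a new vertex. -/
def crossEdges : Set (Sym2 (Fin (n + r))) :=
  (fun p : Fin n × Fin r ↦ s(Fin.castAdd r p.1, Fin.natAdd n p.2)) ''
    {p | H.Adj (Fin.castAdd r p.1) (Fin.natAdd n p.2)}

lemma E1_eq_oldEdges_union_crossEdges :
    E1 n r H = oldEdges n r (oldPart H) ∪ crossEdges H := by
  ext e
  constructor
  · rintro ⟨he, i, hi⟩
    obtain ⟨y, rfl⟩ := Sym2.mem_iff_exists.1 hi
    induction y using Fin.addCases with
    | left j => exact .inl ⟨s(i, j), he, rfl⟩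
    | right j => exact .inr ⟨(i, j), he, rfl⟩
  · rintro (⟨f, hf, rfl⟩ | ⟨p, hp, rfl⟩)
    · induction f with | _ i j
      exact ⟨hf, i, Sym2.mem_mk_left _ _⟩
    · exact ⟨hp, p.1, Sym2.mem_mk_left _ _⟩

lemma disjoint_oldEdges_crossEdges : Disjoint (oldEdges n r G) (crossEdges H) := by
  rw [Set.disjoint_left]
  rintro _ ⟨f, -, rfl⟩ ⟨⟨i, j⟩, -, hp⟩
  induction f with | _ a b
  simp only [Sym2.map_mk, Sym2.eq_iff, Fin.ext_iff, Fin.val_castAdd, Fin.val_natAdd] at hp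
  omega

lemma oldEdges_sdiff (K : SimpleGraph (Fin n)) :
    oldEdges n r G \ oldEdges n r K = oldEdges n r (G \ K) := by
  rw [oldEdges, oldEdges, oldEdges, edgeSet_sdiff,
    Set.image_sdiff (Sym2.map.injective (Fin.castAdd_injective n r))]

lemma ncard_oldEdges : (oldEdges n r G).ncard = G.edgeSet.ncard :=
  Set.ncard_image_of_injective _ (Sym2.map.injective (Fin.castAdd_injective n r))

/-- The new neighbours in `H` of the old vertex `i`. -/
def newNeighbors (i : Fin n) : Set (Fin r) := {j | H.Adj (Fin.castAdd r i) (Fin.natAdd n j)}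

/-- The old neighbours in `H` of the new vertex `j`. -/
def oldNeighbors (j : Fin r) : Set (Fin n) := {i | H.Adj (Fin.castAdd r i) (Fin.natAdd n j)}

lemma sum_ncard_newNeighbors_eq_sum_ncard_oldNeighbors :
    ∑ i, (newNeighbors H i).ncard = ∑ j, (oldNeighbors H j).ncard :=
  sum_ncard_rel_comm fun i j ↦ H.Adj (Fin.castAdd r i) (Fin.natAdd n j)

lemma ncard_crossEdges : (crossEdges H).ncard = ∑ i, (newNeighbors H i).ncard := by
  have hinj : Function.Injective
      fun p : Fin n × Fin r ↦ s(Fin.castAdd r p.1, Fin.natAdd n p.2) := by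
    rintro ⟨a, b⟩ ⟨c, d⟩ h
    simp only [Sym2.eq_iff, Fin.ext_iff, Fin.val_castAdd, Fin.val_natAdd] at h
    ext <;> dsimp only <;> omega
  rw [crossEdges, Set.ncard_image_of_injective _ hinj]
  exact ncard_rel_eq_sum_ncard fun i j ↦ H.Adj (Fin.castAdd r i) (Fin.natAdd n j)

lemma ncard_eq_ncard_preimage_castAdd_add_ncard_preimage_natAdd (s : Set (Fin (n + r))) :
    s.ncard = (Fin.castAdd r ⁻¹' s).ncard + (Fin.natAdd n ⁻¹' s).ncard := by
  classical
  simp only [Set.ncard_eq_toFinset_card', Set.toFinset_card, Fintype.card_subtype, card_filter,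
    Fin.sum_univ_add, Set.mem_preimage]

lemma ncard_neighborSet_castAdd (i : Fin n) : (H.neighborSet (Fin.castAdd r i)).ncard =
    ((oldPart H).neighborSet i).ncard + (newNeighbors H i).ncard :=
  ncard_eq_ncard_preimage_castAdd_add_ncard_preimage_natAdd _

lemma ncard_neighborSet_natAdd (j : Fin r) : (H.neighborSet (Fin.natAdd n j)).ncard =
    (oldNeighbors H j).ncard + ((newPart H).neighborSet j).ncard := by
  have hold : oldNeighbors H j = Fin.castAdd r ⁻¹' H.neighborSet (Fin.natAdd n j) :=
    Set.ext fun i ↦ H.adj_comm _ _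
  rw [hold]
  exact ncard_eq_ncard_preimage_castAdd_add_ncard_preimage_natAdd _

lemma editCost_eq : editCost n r G H = (G \ oldPart H).edgeSet.ncard +
    ((oldPart H \ G).edgeSet.ncard + ∑ i, (newNeighbors H i).ncard) := by
  have hdel : oldEdges n r G \ E1 n r H = oldEdges n r (G \ oldPart H) := by
    rw [E1_eq_oldEdges_union_crossEdges, ← Set.sdiff_sdiff, oldEdges_sdiff,
      (disjoint_oldEdges_crossEdges _ H).sdiff_eq_left]
  have hadd : E1 n r H \ oldEdges n r G = oldEdges n r (oldPart H \ G) ∪ crossEdges H := by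
    rw [E1_eq_oldEdges_union_crossEdges, Set.union_sdiff_distrib, oldEdges_sdiff,
      (disjoint_oldEdges_crossEdges G H).sdiff_eq_right]
  rw [editCost, hdel, hadd, Set.ncard_union_eq (disjoint_oldEdges_crossEdges _ H), ncard_oldEdges,
    ncard_oldEdges, ncard_crossEdges]

end Parts

namespace IsExtension

variable {n r k t : ℕ} {G : SimpleGraph (Fin n)} {H : SimpleGraph (Fin (n + r))}

lemma ncard_neighborSet_sdiff_oldPart (h : IsExtension n r k G H) (i : Fin n) :
    ((G \ oldPart H).neighborSet i).ncard =
      ((oldPart H \ G).neighborSet i).ncard + (newNeighbors H i).ncard := by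
  have hdeg := h.1 i
  have hdel := ncard_neighborSet_sdiff_add_ncard_neighborSet_inf G (oldPart H) i
  have hadd := ncard_neighborSet_sdiff_add_ncard_neighborSet_inf (oldPart H) G i
  rw [ncard_neighborSet_castAdd] at hdeg
  rw [inf_comm] at hadd
  omega

lemma two_mul_ncard_edgeSet_sdiff_oldPart (h : IsExtension n r k G H) :
    2 * (G \ oldPart H).edgeSet.ncard =
      2 * (oldPart H \ G).edgeSet.ncard + ∑ i, (newNeighbors H i).ncard := by
  simp only [← sum_ncard_neighborSet_eq_two_mul_ncard_edgeSet, ← sum_add_distrib,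
    h.ncard_neighborSet_sdiff_oldPart]

lemma two_mul_editCost (h : IsExtension n r k G H) : 2 * editCost n r G H =
    4 * (oldPart H \ G).edgeSet.ncard + 3 * ∑ i, (newNeighbors H i).ncard := by
  have hedges := h.two_mul_ncard_edgeSet_sdiff_oldPart
  rw [editCost_eq]
  omega

lemma le_ncard_oldNeighbors (h : IsExtension n r k G H) (j : Fin r) :
    k + 1 - r ≤ (oldNeighbors H j).ncard := by
  have hdeg := h.2 j
  have hlt : ((newPart H).neighborSet j).ncard < r := by
    simpa using Set.ncard_lt_card ((newPart H).neighborSet_ne_univ (v := j))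
  rw [ncard_neighborSet_natAdd] at hdeg
  omega

lemma mul_le_sum_ncard_newNeighbors (h : IsExtension n r k G H) :
    r * (k + 1 - r) ≤ ∑ i, (newNeighbors H i).ncard := by
  rw [sum_ncard_newNeighbors_eq_sum_ncard_oldNeighbors]
  simpa using card_nsmul_le_sum univ _ _ fun j _ ↦ h.le_ncard_oldNeighbors j

lemma three_mul_le_editCost (h : IsExtension n r k G H) (ht : r * (k + 1 - r) = 2 * t) :
    3 * t ≤ editCost n r G H := by
  have hcost := h.two_mul_editCost
  have hcross := h.mul_le_sum_ncard_newNeighbors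
  omega

lemma isRTSubgraph_of_editCost_eq (h : IsExtension n r k G H) (ht : r * (k + 1 - r) = 2 * t)
    (hcost : editCost n r G H = 3 * t) : IsRTSubgraph G r t (G \ oldPart H).edgeSet := by
  have htwo := h.two_mul_editCost
  have hcross := h.mul_le_sum_ncard_newNeighbors
  have hedges := h.two_mul_ncard_edgeSet_sdiff_oldPart
  have hadd : oldPart H \ G = ⊥ := by
    rw [← edgeSet_eq_empty, ← Set.ncard_eq_zero]
    omega
  refine isRTSubgraph_edgeSet_iff.2 ⟨sdiff_le, by omega, fun i ↦ ?_⟩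
  calc ((G \ oldPart H).neighborSet i).ncard = (newNeighbors H i).ncard := by
        rw [h.ncard_neighborSet_sdiff_oldPart, hadd, neighborSet_bot, Set.ncard_empty, zero_add]
    _ ≤ r := by simpa using Set.ncard_le_card (newNeighbors H i)

end IsExtension

section AttachClique

variable {n r : ℕ}

/-- The graph obtained from `K` by adding a clique on `r` new vertices and joining each old
vertex `i` to the new vertices `j` with `R i j`. -/
def attachClique (K : SimpleGraph (Fin n)) (R : Fin n → Fin r → Prop) :
    SimpleGraph (Fin (n + r)) :=
  ((K ⊕g (⊤ : SimpleGraph (Fin r))) ⊔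
    fromEdgeSet {e | ∃ i j, R i j ∧ e = s(.inl i, .inr j)}).comap finSumFinEquiv.symm

variable (K : SimpleGraph (Fin n)) (R : Fin n → Fin r → Prop)

lemma oldPart_attachClique : oldPart (attachClique K R) = K := by
  ext
  simp [attachClique]

lemma newPart_attachClique : newPart (attachClique K R) = ⊤ := by
  ext
  simp [attachClique]

lemma newNeighbors_attachClique (i : Fin n) : newNeighbors (attachClique K R) i = {j | R i j} := by
  ext
  simp [newNeighbors, attachClique]

lemma oldNeighbors_attachClique (j : Fin r) : oldNeighbors (attachClique K R) j = {i | R i j} := by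
  ext
  simp [oldNeighbors, attachClique]

end AttachClique

section AttachCliqueSdiff

variable {n r k t : ℕ} {G T : SimpleGraph (Fin n)} {R : Fin n → Fin r → Prop}

lemma isExtension_attachClique_sdiff (hT : T ≤ G) (hrk : r ≤ k + 1)
    (hrow : ∀ i, {j | R i j}.ncard = (T.neighborSet i).ncard)
    (hcol : ∀ j, {i | R i j}.ncard = k + 1 - r) :
    IsExtension n r k G (attachClique (G \ T) R) := by
  refine ⟨fun i ↦ ?_, fun j ↦ ?_⟩
  · rw [ncard_neighborSet_castAdd, oldPart_attachClique, newNeighbors_attachClique, hrow,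
      ← ncard_neighborSet_sdiff_add_ncard_neighborSet_inf G T, inf_eq_right.2 hT]
  · have hr := j.pos
    have hclique : ((⊤ : SimpleGraph (Fin r)).neighborSet j).ncard = r - 1 := by
      rw [neighborSet_top, Set.ncard_compl, Set.ncard_singleton, Nat.card_fin]
    rw [ncard_neighborSet_natAdd, newPart_attachClique, oldNeighbors_attachClique, hcol, hclique]
    omega

lemma editCost_attachClique_sdiff (hT : T ≤ G) :
    editCost n r G (attachClique (G \ T) R) = T.edgeSet.ncard + ∑ i, {j | R i j}.ncard := by
  have hdel : G \ (G \ T) = T := sdiff_sdiff_eq_self hT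
  have hadd : (G \ T) \ G = ⊥ := sdiff_eq_bot_iff.2 sdiff_le
  simp only [editCost_eq, oldPart_attachClique, newNeighbors_attachClique, hdel, hadd,
    edgeSet_bot, Set.ncard_empty, zero_add]

lemma IsRTSubgraph.exists_isExtension {S : Set (Sym2 (Fin n))} (hS : IsRTSubgraph G r t S)
    (hrk : r ≤ k + 1) (ht : r * (k + 1 - r) = 2 * t) :
    ∃ H, IsExtension n r k G H ∧ editCost n r G H = 3 * t := by
  obtain ⟨T, rfl⟩ := hS.exists_edgeSet_eq
  obtain ⟨hTG, hcard, hdeg⟩ := isRTSubgraph_edgeSet_iff.1 hS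
  have hsum : ∑ i, (T.neighborSet i).ncard = 2 * t := by
    rw [sum_ncard_neighborSet_eq_two_mul_ncard_edgeSet, hcard]
  obtain ⟨R, hrow, hcol⟩ := exists_rel_ncard_eq_of_sum_eq (κ := Fin r) (m := k + 1 - r)
    (fun i ↦ (T.neighborSet i).ncard) (by simpa using hdeg)
    (by rw [hsum, ← ht, Nat.card_fin, mul_comm])
  refine ⟨attachClique (G \ T) R, isExtension_attachClique_sdiff hTG hrk hrow hcol, ?_⟩
  rw [editCost_attachClique_sdiff hTG, hcard, sum_congr rfl fun i _ ↦ hrow i, hsum]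
  omega

end AttachCliqueSdiff

lemma editNumber_eq_natCast_iff {n r k m : ℕ} {G : SimpleGraph (Fin n)} :
    editNumber n r k G = m ↔ (∃ H, IsExtension n r k G H ∧ editCost n r G H = m) ∧
      ∀ H, IsExtension n r k G H → m ≤ editCost n r G H := by
  constructor
  · intro h
    have hlb (H) (hH : IsExtension n r k G H) : m ≤ editCost n r G H := by
      rw [← Nat.cast_le (α := ℕ∞), ← h]
      exact sInf_le ⟨H, hH, rfl⟩
    have hne : ((fun H ↦ (editCost n r G H : ℕ∞)) '' {H | IsExtension n r k G H}).Nonempty := by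
      rw [Set.nonempty_iff_ne_empty]
      intro hempty
      rw [editNumber, hempty, sInf_empty] at h
      exact ENat.top_ne_natCast _ h
    obtain ⟨H, hH, hcost⟩ := csInf_mem hne
    exact ⟨⟨H, hH, Nat.cast_injective (R := ℕ∞) (hcost.trans h)⟩, hlb⟩
  · rintro ⟨⟨H, hH, hcost⟩, hlb⟩
    refine IsLeast.csInf_eq ⟨⟨H, hH, congrArg _ hcost⟩, ?_⟩
    rintro _ ⟨K, hK, rfl⟩
    exact Nat.cast_le.2 (hlb K hK)

lemma even_mul_add_one_sub {r k : ℕ} (hrk : r ≤ k) (h : Even (r * k)) :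
    Even (r * (k + 1 - r)) := by
  obtain ⟨m, rfl⟩ := Nat.exists_eq_add_of_le hrk
  rw [add_assoc, Nat.add_sub_cancel_left]
  grind

theorem edit_number_eq_iff_subgraph (n r k : ℕ) (G : SimpleGraph (Fin n))
    (hr : 1 ≤ r) (hk : 1 ≤ k) (hrk : r ≤ k) (heven : Even (r * k)) :
    editNumber n r k G = ((3 * (r * (k - r + 1)) / 2 : ℕ) : ℕ∞) ↔
      ∃ S : Set (Sym2 (Fin n)), IsRTSubgraph G r (r * (k - r + 1) / 2) S := by
  obtain ⟨t, ht⟩ := (even_mul_add_one_sub hrk heven).two_dvd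
  have hkr : k - r + 1 = k + 1 - r := by omega
  have hhalf : 2 * t / 2 = t := by omega
  have hthree : 3 * (2 * t) / 2 = 3 * t := by omega
  rw [hkr, ht, hhalf, hthree, editNumber_eq_natCast_iff]
  constructor
  · rintro ⟨⟨H, hH, hcost⟩, -⟩
    exact ⟨_, hH.isRTSubgraph_of_editCost_eq ht hcost⟩
  · rintro ⟨S, hS⟩
    exact ⟨hS.exists_isExtension (by omega) ht, fun H hH ↦ hH.three_mul_le_editCost ht⟩
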